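/- For every ρ > 1 and every N > 1 there exist a complex Hilbert space X and an N-tuple A = (A₁,…,A_N) of bounded linear operators on X such that A admits a unitary ρ-dilation (A ∈ C_{ρ,N}) but A does not admit a uniform unitary ρ-dilation (A ∉ C^u_{ρ,N}); hence C^u_{ρ,N} ⊊ C_{ρ,N}. -/

import Mathlib

open ContinuousLinearMap

noncomputable section

/-- A continuous linear operator on a complex Hilbert space is unitary. -/
def IsUnitaryOp {Y : Type*} [NormedAddCommGroup Y] [InnerProductSpace ℂ Y] [CompleteSpace Y]
    (T : Y →L[ℂ] Y) : Prop :=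
  T ∘L adjoint T = 1 ∧ adjoint T ∘L T = 1

/-- A unitary `ρ`-dilation of an `N`-tuple of bounded operators on a complex Hilbert space `X`:
a complex Hilbert space `Y`, a linear isometry `ι : X → Y`, and an `N`-tuple `At` of operators
on `Y` such that every unimodular combination `ζ₁At₁ + ⋯ + ζ_N At_N` is unitary, and
`(z₁A₁ + ⋯ + z_N A_N)ⁿ = ρ · ι* ∘ (z₁At₁ + ⋯ + z_N At_N)ⁿ ∘ ι` for all `z ∈ ℂ^N` and `n ≥ 1`. -/
structure UnitaryRhoDilation (N : ℕ) (ρ : ℝ) (X : Type*) [NormedAddCommGroup X]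
    [InnerProductSpace ℂ X] [CompleteSpace X] (A : Fin N → X →L[ℂ] X) where
  Y : Type
  [instN : NormedAddCommGroup Y]
  [instI : InnerProductSpace ℂ Y]
  [instC : CompleteSpace Y]
  ι : X →L[ℂ] Y
  isom : Isometry ι
  At : Fin N → Y →L[ℂ] Y
  unit : ∀ ζ : Fin N → ℂ, (∀ k, ‖ζ k‖ = 1) → IsUnitaryOp (∑ k, ζ k • At k)
  dil : ∀ (z : Fin N → ℂ) (n : ℕ), 1 ≤ n →
    (∑ k, z k • A k) ^ n = (ρ : ℂ) • (adjoint ι ∘L (((∑ k, z k • At k) ^ n) ∘L ι))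

/-- The class `C_{ρ,N}`: `N`-tuples of bounded operators admitting a unitary `ρ`-dilation. -/
def MemC (N : ℕ) (ρ : ℝ) {X : Type*} [NormedAddCommGroup X] [InnerProductSpace ℂ X]
    [CompleteSpace X] (A : Fin N → X →L[ℂ] X) : Prop :=
  Nonempty (UnitaryRhoDilation N ρ X A)

/-- A uniform unitary `ρ`-dilation of an `N`-tuple of bounded operators on a complex Hilbert
space `X`: a complex Hilbert space `Y`, a linear isometry `ι : X → Y`, and an `N`-tuple `At`
of operators on `Y` such that every unimodular combination `ζ₁At₁ + ⋯ + ζ_N At_N` is unitary,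
and for every nonempty word `i₁,…,iₙ` one has
`A_{i₁}⋯A_{iₙ} = ρ · ι* ∘ (At_{i₁}⋯At_{iₙ}) ∘ ι`. -/
structure UniformUnitaryRhoDilation (N : ℕ) (ρ : ℝ) (X : Type*) [NormedAddCommGroup X]
    [InnerProductSpace ℂ X] [CompleteSpace X] (A : Fin N → X →L[ℂ] X) where
  Y : Type
  [instN : NormedAddCommGroup Y]
  [instI : InnerProductSpace ℂ Y]
  [instC : CompleteSpace Y]
  ι : X →L[ℂ] Y
  isom : Isometry ι
  At : Fin N → Y →L[ℂ] Y
  unit : ∀ ζ : Fin N → ℂ, (∀ k, ‖ζ k‖ = 1) → IsUnitaryOp (∑ k, ζ k • At k)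
  dil : ∀ w : List (Fin N), w ≠ [] →
    (w.map A).prod = (ρ : ℂ) • (adjoint ι ∘L ((w.map At).prod ∘L ι))

/-- The class `C^u_{ρ,N}`: `N`-tuples admitting a uniform unitary `ρ`-dilation. -/
def MemCu (N : ℕ) (ρ : ℝ) {X : Type*} [NormedAddCommGroup X] [InnerProductSpace ℂ X]
    [CompleteSpace X] (A : Fin N → X →L[ℂ] X) : Prop :=
  Nonempty (UniformUnitaryRhoDilation N ρ X A)

/-- A witness for STATEMENT 14: a complex Hilbert space `X` and an `N`-tuple `A` on `X`
admitting a unitary `ρ`-dilation but no uniform unitary `ρ`-dilation. -/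
structure UnitaryNotUniformWitness (N : ℕ) (ρ : ℝ) where
  X : Type
  [instN : NormedAddCommGroup X]
  [instI : InnerProductSpace ℂ X]
  [instC : CompleteSpace X]
  A : Fin N → X →L[ℂ] X
  memC : MemC N ρ A
  not_memCu : ¬ MemCu N ρ A

/-!
Suppose that every pencil `z₁B₁ + ⋯ + z_N B_N` squares to zero. Then, for a unitary `1`-dilation of
`B`, the dilation identity of `ρB` is an equality between zeros for `n ≥ 2` and linear in `B` for
`n = 1`, so `B ∈ C_{1,N}` implies `ρB ∈ C_{ρ,N}` for every `ρ`. Suppose moreover that all unimodular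
pencils of `B` preserve the norm of one vector `x`. A uniform unitary `ρ`-dilation `(j, T)` of `ρB`
satisfies `B_k = j* T_k j`, and since no norm is lost at `x` this sharpens to `T_k j x = j B_k x`.
The words of length two then give `ρ B_l B_k x = j* T_l T_k j x = j* T_l j B_k x = B_l B_k x`, which
forces `B_l B_k x = 0` when `ρ ≠ 1`.

It remains to find `B` as above with some `B_l B_k x ≠ 0`. On `ℓ²(ℤ × Bool)` let a pencil send
`b (n, x)` to `z_{f x} b (n + 1, !x)`, and compress it to the span of `b₀₀ + b₀₁`, `b₁₀`, `b₁₁` and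
`b₂₀ - b₂₁`: the two paths from the bottom to the top cancel in the square of a pencil, but not in
the products of the individual operators.
-/

theorem sum_smul_smul_comm {R M κ : Type*} [CommSemiring R] [AddCommMonoid M] [Module R M]
    [Fintype κ] (z : κ → R) (c : R) (u : κ → M) :
    ∑ k, z k • (c • u) k = c • ∑ k, z k • u k := by
  simp only [Pi.smul_apply, Finset.smul_sum]
  exact Finset.sum_congr rfl fun k _ => smul_comm _ _ _

theorem span_range_le_span_range_smul_comp_perm {R M I : Type*} [DivisionRing R] [AddCommGroup M]
    [Module R M] (v : I → M) (σ : Equiv.Perm I) {w : I → R} (hw : ∀ i, w i ≠ 0) :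
    Submodule.span R (Set.range v) ≤ Submodule.span R (Set.range fun i => w i • v (σ i)) := by
  refine Submodule.span_le.2 ?_
  rintro _ ⟨i, rfl⟩
  exact (Submodule.smul_mem_iff _ (hw (σ.symm i))).1 (Submodule.subset_span ⟨σ.symm i, by simp⟩)

theorem eq_of_forall_sum_unimodular_smul_eq {R M κ : Type*} [NormedDivisionRing R] [NeZero (2 : R)]
    [AddCommGroup M] [Module R M] [Fintype κ] {u v : κ → M}
    (h : ∀ ζ : κ → R, (∀ k, ‖ζ k‖ = 1) → ∑ k, ζ k • u k = ∑ k, ζ k • v k) : u = v := by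
  classical
  have flip_sign (w : κ → M) (k : κ) :
      ∑ l, (1 : κ → R) l • w l - ∑ l, (1 - Pi.single k 2 : κ → R) l • w l = (2 : R) • w k := by
    simp [sub_smul, Pi.single_apply]
  funext k
  have hone := h 1 (by simp)
  have hflip := h (1 - Pi.single k 2) fun l => by
    obtain rfl | hl := eq_or_ne l k
    · norm_num
    · simp [hl]
  exact smul_right_injective M (two_ne_zero (α := R))
    (by simp only [← flip_sign, hone, hflip])

section Compression

variable {𝕜 E F : Type*} [RCLike 𝕜] [NormedAddCommGroup E] [InnerProductSpace 𝕜 E]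
  [NormedAddCommGroup F] [InnerProductSpace 𝕜 F]

theorem apply_adjoint_eq_self_of_norm_le [CompleteSpace E] [CompleteSpace F] {j : F →L[𝕜] E}
    (hj : Isometry j) {u : E} (hu : ‖u‖ ≤ ‖adjoint j u‖) : j (adjoint j u) = u := by
  have norm_j := (AddMonoidHomClass.isometry_iff_norm j).1 hj
  refine (eq_of_norm_le_re_inner_eq_norm_sq (𝕜 := 𝕜) (by rwa [norm_j]) ?_).symm
  rw [← adjoint_inner_left, inner_self_eq_norm_sq, norm_j]

theorem apply_adjoint_eq_self_of_forall_unimodular {κ : Type*} [Fintype κ] [CompleteSpace E]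
    [CompleteSpace F] {j : F →L[𝕜] E} (hj : Isometry j) {u : κ → E}
    (hu : ∀ ζ : κ → 𝕜, (∀ k, ‖ζ k‖ = 1) → ‖∑ k, ζ k • u k‖ ≤ ‖adjoint j (∑ k, ζ k • u k)‖)
    (k : κ) : j (adjoint j (u k)) = u k :=
  congrFun (eq_of_forall_sum_unimodular_smul_eq (R := 𝕜) (u := fun k => j (adjoint j (u k)))
    fun ζ hζ => by simpa using apply_adjoint_eq_self_of_norm_le hj (hu ζ hζ)) k

/-- The compression `P_K T|_K` of an operator `T` to a subspace `K`, as a linear map in `T`. -/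
def compression (K : Submodule 𝕜 E) [K.HasOrthogonalProjection] :
    (E →L[𝕜] E) →ₗ[𝕜] (K →L[𝕜] K) where
  toFun T := K.orthogonalProjectionOnto ∘L T ∘L K.subtypeL
  map_add' S T := by simp
  map_smul' c T := by simp

variable (K : Submodule 𝕜 E) [K.HasOrthogonalProjection]

theorem compression_apply (T : E →L[𝕜] E) (x : K) :
    compression K T x = K.orthogonalProjectionOnto (T x) := rfl

variable {K} {M : Submodule 𝕜 E} {T : E →L[𝕜] E}

theorem coe_compression_apply_of_mem {x : K} (hx : T x ∈ K) : (compression K T x : E) = T x := by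
  rw [compression_apply, ← K.starProjection_apply, K.starProjection_eq_self_iff.2 hx]

theorem compression_eq_zero (hKM : K ⟂ M) (hTK : K ≤ M.comap T.toLinearMap) :
    compression K T = 0 := by
  ext1 x
  exact K.orthogonalProjectionOnto_eq_zero_iff.2 (hKM.symm.le (hTK x.2))

theorem sub_compression_apply_mem (hKM : K ⟂ M) (hTK : K ≤ (K ⊔ M).comap T.toLinearMap)
    (x : K) : T x - compression K T x ∈ M := by
  obtain ⟨k, hk, m, hm, hkm⟩ := Submodule.mem_sup.1 (hTK x.2)
  have : (compression K T x : E) = k := by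
    rw [compression_apply, ← K.starProjection_apply]
    exact K.eq_starProjection_of_mem_orthogonal' hk (hKM.symm.le hm) hkm.symm
  simpa [this, ← (show k + m = T x from hkm)] using hm

-- Sarason: compressing to the semi-invariant subspace `K = (K ⊔ M) ⊖ M` is multiplicative.
theorem compression_pow (hKM : K ⟂ M) (hTM : M ≤ M.comap T.toLinearMap)
    (hTK : K ≤ (K ⊔ M).comap T.toLinearMap) (n : ℕ) :
    compression K T ^ n = compression K (T ^ n) := by
  have pow_sub_mem (x : K) : (T ^ n) x - (compression K T ^ n) x ∈ M := by
    induction n with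
    | zero => simp
    | succ n ih =>
      have hTmem : T ((T ^ n) x - (compression K T ^ n) x) ∈ M := hTM ih
      simpa [pow_succ'] using
        add_mem hTmem (sub_compression_apply_mem hKM hTK ((compression K T ^ n) x))
  ext1 x
  have h := K.orthogonalProjectionOnto_eq_zero_iff.2 (hKM.symm.le (pow_sub_mem x))
  rw [map_sub, K.orthogonalProjectionOnto_mem_subspace_eq_self, sub_eq_zero] at h
  exact h.symm

end Compression

section ColoredShift

variable {𝕜 E I κ : Type*} [RCLike 𝕜] [NormedAddCommGroup E] [InnerProductSpace 𝕜 E]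

theorem orthonormal_smul_comp_perm {v : I → E} (hv : Orthonormal 𝕜 v) (σ : Equiv.Perm I)
    {w : I → 𝕜} (hw : ∀ i, ‖w i‖ = 1) : Orthonormal 𝕜 fun i => w i • v (σ i) := by
  refine ⟨fun i => by simp [norm_smul, hw, hv.1], fun i j hij => ?_⟩
  change inner 𝕜 (w i • v (σ i)) (w j • v (σ j)) = 0
  rw [inner_smul_left, inner_smul_right, hv.2 (σ.injective.ne hij), mul_zero, mul_zero]

variable [CompleteSpace E]

/-- The unitary operator `b i ↦ w i • b (σ i)` given by a permutation `σ` of a Hilbert basis `b`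
and unimodular weights `w`. -/
def weightedPerm (b : HilbertBasis I 𝕜 E) (σ : Equiv.Perm I) {w : I → 𝕜}
    (hw : ∀ i, ‖w i‖ = 1) : E ≃ₗᵢ[𝕜] E :=
  b.repr.trans (HilbertBasis.mk (orthonormal_smul_comp_perm b.orthonormal σ hw)
    (b.dense_span.symm.le.trans (Submodule.topologicalClosure_mono
      (span_range_le_span_range_smul_comp_perm b σ fun i =>
        norm_ne_zero_iff.1 (by simp [hw]))))).repr.symm

theorem weightedPerm_apply (b : HilbertBasis I 𝕜 E) (σ : Equiv.Perm I) {w : I → 𝕜}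
    (hw : ∀ i, ‖w i‖ = 1) (i : I) : weightedPerm b σ hw (b i) = w i • b (σ i) := by
  classical
  simp [weightedPerm, HilbertBasis.repr_self, HilbertBasis.repr_symm_single]

/-- The closed span of the basis vectors of colour `k`, for a colouring `c` of the index set. -/
def colorSubspace (b : HilbertBasis I 𝕜 E) (c : I → κ) (k : κ) : Submodule 𝕜 E :=
  (Submodule.span 𝕜 (b '' (c ⁻¹' {k}))).topologicalClosure

instance (b : HilbertBasis I 𝕜 E) (c : I → κ) (k : κ) : CompleteSpace (colorSubspace b c k) :=
  Submodule.topologicalClosure.completeSpace _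

/-- The tuple of partial isometries indexed by colours, the `k`-th of which moves the basis vectors
of colour `k` by `σ` and kills the others. -/
def coloredShift (b : HilbertBasis I 𝕜 E) (σ : Equiv.Perm I) (c : I → κ) (k : κ) : E →L[𝕜] E :=
  (weightedPerm b σ (w := 1) (by simp) : E →L[𝕜] E) ∘L (colorSubspace b c k).starProjection

variable (b : HilbertBasis I 𝕜 E) (σ : Equiv.Perm I) (c : I → κ)

theorem starProjection_colorSubspace_apply [DecidableEq κ] (k : κ) (i : I) :
    (colorSubspace b c k).starProjection (b i) = if c i = k then b i else 0 := by
  split_ifs with hik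
  · exact Submodule.starProjection_eq_self_iff.2
      (Submodule.le_topologicalClosure _ (Submodule.subset_span ⟨i, hik, rfl⟩))
  · rw [Submodule.starProjection_apply_eq_zero_iff, colorSubspace, Submodule.orthogonal_closure]
    rw [← Submodule.span_singleton_le_iff_mem, ← Submodule.isOrtho_iff_le, Submodule.isOrtho_span]
    rintro _ rfl _ ⟨l, hl, rfl⟩
    exact b.orthonormal.2 (by rintro rfl; exact hik hl)

theorem coloredShift_apply [DecidableEq κ] (k : κ) (i : I) :
    coloredShift b σ c k (b i) = if c i = k then b (σ i) else 0 := by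
  rw [coloredShift, comp_apply, starProjection_colorSubspace_apply]
  split_ifs
  · simpa using weightedPerm_apply b σ (w := 1) (by simp) i
  · simp

theorem sum_smul_coloredShift_apply [Fintype κ] (z : κ → 𝕜) (i : I) :
    (∑ k, z k • coloredShift b σ c k) (b i) = z (c i) • b (σ i) := by
  classical
  simp [coloredShift_apply]

theorem sum_smul_coloredShift_mem_unitary [Fintype κ] {ζ : κ → 𝕜} (hζ : ∀ k, ‖ζ k‖ = 1) :
    ∑ k, ζ k • coloredShift b σ c k ∈ unitary (E →L[𝕜] E) := by
  have eq_weightedPerm : ∑ k, ζ k • coloredShift b σ c k =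
      weightedPerm b σ (w := ζ ∘ c) fun i => hζ (c i) := by
    refine ext_on (Submodule.dense_iff_topologicalClosure_eq_top.2 b.dense_span) ?_
    rintro _ ⟨i, rfl⟩
    exact (sum_smul_coloredShift_apply b σ c ζ i).trans
      (weightedPerm_apply b σ (fun i => hζ (c i)) i).symm
  rw [eq_weightedPerm]
  exact (Unitary.linearIsometryEquiv.symm (weightedPerm b σ fun i => hζ (c i))).2

end ColoredShift

section Ladder

variable {𝕜 E κ : Type*} [RCLike 𝕜] [NormedAddCommGroup E] [InnerProductSpace 𝕜 E]

/-- `T` climbs the ladder `ℤ × Bool`, crossing sides at every step: it multiplies by `a x` when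
leaving side `x`. -/
def IsLadderMap (b : HilbertBasis (ℤ × Bool) 𝕜 E) (a : Bool → 𝕜) (T : E →L[𝕜] E) : Prop :=
  ∀ n x, T (b (n, x)) = a x • b (n + 1, !x)

/-- The four-dimensional subspace of the ladder to which we compress: a diamond with bottom
`b₀₀ + b₀₁`, sides `b₁₀` and `b₁₁`, and top `b₂₀ - b₂₁`. -/
def diamond (b : HilbertBasis (ℤ × Bool) 𝕜 E) : Submodule 𝕜 E :=
  Submodule.span 𝕜 {b (0, false) + b (0, true), b (1, false), b (1, true),
    b (2, false) - b (2, true)}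

/-- The subspace making up for the failure of `diamond b` to be invariant under ladder maps:
it is orthogonal to `diamond b`, and both it and its sum with `diamond b` are invariant. -/
def diamondTail (b : HilbertBasis (ℤ × Bool) 𝕜 E) : Submodule 𝕜 E :=
  Submodule.span 𝕜 (insert (b (2, false) + b (2, true)) {v | ∃ n x, 3 ≤ n ∧ b (n, x) = v})

instance (b : HilbertBasis (ℤ × Bool) 𝕜 E) : FiniteDimensional 𝕜 (diamond b) :=
  FiniteDimensional.span_of_finite 𝕜 (by simp)

instance (b : HilbertBasis (ℤ × Bool) 𝕜 E) : CompleteSpace (diamond b) :=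
  FiniteDimensional.complete 𝕜 _

variable {b : HilbertBasis (ℤ × Bool) 𝕜 E} {a : Bool → 𝕜} {T : E →L[𝕜] E}

theorem diamond_isOrtho_diamondTail : diamond b ⟂ diamondTail b := by
  have hb := orthonormal_iff_ite.1 b.orthonormal
  refine Submodule.isOrtho_span.2 ?_
  rintro u (rfl | rfl | rfl | rfl) v (rfl | ⟨n, x, hn, rfl⟩) <;>
    simp only [inner_add_left, inner_add_right, inner_sub_left, hb, Prod.mk.injEq] <;>
    grind

theorem mem_diamondTail_of_three_le {n : ℤ} (hn : 3 ≤ n) (x : Bool) : b (n, x) ∈ diamondTail b :=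
  Submodule.subset_span (Or.inr ⟨n, x, hn, rfl⟩)

theorem mem_diamondTail_two : b (2, false) + b (2, true) ∈ diamondTail b :=
  Submodule.subset_span (Or.inl rfl)

theorem bottom_mem_diamond : b (0, false) + b (0, true) ∈ diamond b :=
  Submodule.subset_span (by simp)

theorem side_mem_diamond (x : Bool) : b (1, x) ∈ diamond b :=
  Submodule.subset_span (by cases x <;> simp)

theorem top_mem_diamond : b (2, false) - b (2, true) ∈ diamond b :=
  Submodule.subset_span (by simp)

theorem mem_diamond_sup_diamondTail_two (x : Bool) : b (2, x) ∈ diamond b ⊔ diamondTail b := by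
  have htop : b (2, false) - b (2, true) ∈ diamond b ⊔ diamondTail b :=
    Submodule.mem_sup_left top_mem_diamond
  have htail : b (2, false) + b (2, true) ∈ diamond b ⊔ diamondTail b :=
    Submodule.mem_sup_right mem_diamondTail_two
  refine (Submodule.smul_mem_iff _ (two_ne_zero (α := 𝕜))).1 ?_
  cases x
  · convert add_mem htail htop using 1
    module
  · convert sub_mem htail htop using 1
    module

namespace IsLadderMap

variable (hT : IsLadderMap b a T)
include hT

theorem apply_bottom_mem_diamond : T (b (0, false) + b (0, true)) ∈ diamond b := by
  rw [map_add, hT, hT]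
  exact add_mem (Submodule.smul_mem _ _ (side_mem_diamond _))
    (Submodule.smul_mem _ _ (side_mem_diamond _))

theorem diamondTail_le_comap : diamondTail b ≤ (diamondTail b).comap T.toLinearMap := by
  have apply_mem {n : ℤ} (hn : 2 ≤ n) (x : Bool) : T (b (n, x)) ∈ diamondTail b := by
    rw [hT]
    exact Submodule.smul_mem _ _ (mem_diamondTail_of_three_le (by lia) _)
  refine Submodule.span_le.2 ?_
  rintro _ (rfl | ⟨n, x, hn, rfl⟩)
  · simpa using add_mem (apply_mem le_rfl false) (apply_mem le_rfl true)
  · exact apply_mem (by lia) x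

theorem diamond_le_comap : diamond b ≤ (diamond b ⊔ diamondTail b).comap T.toLinearMap := by
  have apply_side_mem (x : Bool) : T (b (1, x)) ∈ diamond b ⊔ diamondTail b := by
    rw [hT]
    exact Submodule.smul_mem _ _ (mem_diamond_sup_diamondTail_two _)
  refine Submodule.span_le.2 ?_
  rintro _ (rfl | rfl | rfl | rfl)
  · exact Submodule.mem_sup_left hT.apply_bottom_mem_diamond
  · exact apply_side_mem false
  · exact apply_side_mem true
  · refine Submodule.mem_sup_right ?_
    change T (b (2, false) - b (2, true)) ∈ diamondTail b
    rw [map_sub, hT, hT]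
    exact sub_mem (Submodule.smul_mem _ _ (mem_diamondTail_of_three_le le_rfl _))
      (Submodule.smul_mem _ _ (mem_diamondTail_of_three_le le_rfl _))

theorem sq_apply (n : ℤ) (x : Bool) :
    (T ^ 2) (b (n, x)) = (a false * a true) • b (n + 2, x) := by
  have : n + 1 + 1 = n + 2 := by ring
  cases x <;> simp [pow_two, hT _ _, smul_smul, this, mul_comm]

-- Both paths through the diamond carry the weight `a false * a true`, so the bottom vector is
-- sent to a multiple of `b₂₀ + b₂₁`, which is orthogonal to the top.
theorem diamond_le_comap_sq : diamond b ≤ (diamondTail b).comap (T ^ 2).toLinearMap := by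
  have apply_mem {n : ℤ} (hn : 1 ≤ n) (x : Bool) : (T ^ 2) (b (n, x)) ∈ diamondTail b := by
    rw [hT.sq_apply]
    exact Submodule.smul_mem _ _ (mem_diamondTail_of_three_le (by lia) _)
  refine Submodule.span_le.2 ?_
  rintro _ (rfl | rfl | rfl | rfl)
  · change (T ^ 2) (b (0, false) + b (0, true)) ∈ diamondTail b
    rw [map_add, hT.sq_apply, hT.sq_apply, ← smul_add]
    exact Submodule.smul_mem _ _ mem_diamondTail_two
  · exact apply_mem le_rfl false
  · exact apply_mem le_rfl true
  · change (T ^ 2) (b (2, false) - b (2, true)) ∈ diamondTail b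
    rw [map_sub]
    exact sub_mem (apply_mem one_le_two false) (apply_mem one_le_two true)

theorem compression_pow (n : ℕ) :
    compression (diamond b) T ^ n = compression (diamond b) (T ^ n) :=
  _root_.compression_pow diamond_isOrtho_diamondTail hT.diamondTail_le_comap hT.diamond_le_comap n

theorem compression_sq : compression (diamond b) T ^ 2 = 0 := by
  rw [hT.compression_pow]
  exact compression_eq_zero diamond_isOrtho_diamondTail hT.diamond_le_comap_sq

end IsLadderMap

variable [CompleteSpace E]

/-- The coloured shift along the ladder whose colour `f x` depends only on the side `x`. -/
def ladderShift (b : HilbertBasis (ℤ × Bool) 𝕜 E) (f : Bool → κ) : κ → E →L[𝕜] E :=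
  coloredShift b ((Equiv.addRight 1).prodCongr Equiv.boolNot) fun m => f m.2

/-- The compression of `ladderShift b f` to the diamond. -/
def diamondTuple (b : HilbertBasis (ℤ × Bool) 𝕜 E) (f : Bool → κ) (k : κ) :
    diamond b →L[𝕜] diamond b :=
  compression (diamond b) (ladderShift b f k)

variable (b) (f : Bool → κ)

theorem isLadderMap_sum_smul_ladderShift [Fintype κ] (z : κ → 𝕜) :
    IsLadderMap b (z ∘ f) (∑ k, z k • ladderShift b f k) :=
  fun n x => sum_smul_coloredShift_apply b _ _ z (n, x)

theorem isLadderMap_ladderShift [DecidableEq κ] (k : κ) :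
    IsLadderMap b (fun x => if f x = k then 1 else 0) (ladderShift b f k) := fun n x => by
  simp [ladderShift, coloredShift_apply]

theorem sum_smul_diamondTuple [Fintype κ] (z : κ → 𝕜) :
    ∑ k, z k • diamondTuple b f k = compression (diamond b) (∑ k, z k • ladderShift b f k) := by
  simp [diamondTuple]

theorem sum_smul_diamondTuple_sq [Fintype κ] (z : κ → 𝕜) :
    (∑ k, z k • diamondTuple b f k) ^ 2 = 0 := by
  rw [sum_smul_diamondTuple, (isLadderMap_sum_smul_ladderShift b f z).compression_sq]

/-- The bottom vector of the diamond. -/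
def diamondBottom : diamond b := ⟨b (0, false) + b (0, true), bottom_mem_diamond⟩

theorem norm_sum_smul_diamondTuple_bottom [Fintype κ] {ζ : κ → 𝕜} (hζ : ∀ k, ‖ζ k‖ = 1) :
    ‖(∑ k, ζ k • diamondTuple b f k) (diamondBottom b)‖ = ‖diamondBottom b‖ := by
  rw [sum_smul_diamondTuple, ← Submodule.norm_coe, ← Submodule.norm_coe,
    coe_compression_apply_of_mem
      (isLadderMap_sum_smul_ladderShift b f ζ).apply_bottom_mem_diamond]
  exact norm_map_of_mem_unitary (sum_smul_coloredShift_mem_unitary b _ _ hζ) _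

variable {f}

theorem diamondTuple_diamondTuple_bottom_ne_zero (hf : f false ≠ f true) :
    diamondTuple b f (f false) (diamondTuple b f (f true) (diamondBottom b)) ≠ 0 := by
  classical
  have hfalse := isLadderMap_ladderShift b f (f false)
  have htrue := isLadderMap_ladderShift b f (f true)
  have first_step : (diamondTuple b f (f true) (diamondBottom b) : E) = b (1, false) := by
    rw [diamondTuple, coe_compression_apply_of_mem htrue.apply_bottom_mem_diamond, diamondBottom,
      map_add, htrue, htrue]
    simp [hf]
  have second_step : ladderShift b f (f false) (b (1, false)) = b (2, true) := by
    rw [hfalse]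
    simp
  rw [diamondTuple, compression_apply, first_step, second_step, Ne,
    Submodule.orthogonalProjectionOnto_eq_zero_iff]
  intro h
  simpa [-inner_self_eq_norm_sq_to_K, inner_sub_left, orthonormal_iff_ite.1 b.orthonormal]
    using h _ top_mem_diamond

end Ladder

theorem isUnitaryOp_iff_mem_unitary {E : Type*} [NormedAddCommGroup E] [InnerProductSpace ℂ E]
    [CompleteSpace E] {T : E →L[ℂ] E} : IsUnitaryOp T ↔ T ∈ unitary (E →L[ℂ] E) :=
  and_comm

section Classes

variable {N : ℕ} {X : Type*} [NormedAddCommGroup X] [InnerProductSpace ℂ X] [CompleteSpace X]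

theorem memC_one_compression {E : Type} [NormedAddCommGroup E] [InnerProductSpace ℂ E]
    [CompleteSpace E] (K : Submodule ℂ E) [CompleteSpace K] {T : Fin N → E →L[ℂ] E}
    (hT : ∀ ζ : Fin N → ℂ, (∀ k, ‖ζ k‖ = 1) → ∑ k, ζ k • T k ∈ unitary (E →L[ℂ] E))
    (hpow : ∀ (z : Fin N → ℂ) (n : ℕ),
      compression K (∑ k, z k • T k) ^ n = compression K ((∑ k, z k • T k) ^ n)) :
    MemC N 1 fun k => compression K (T k) :=
  ⟨{ Y := E
     ι := K.subtypeL
     isom := K.subtypeₗᵢ.isometry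
     At := T
     unit := fun ζ hζ => isUnitaryOp_iff_mem_unitary.2 (hT ζ hζ)
     dil := fun z n _ => by
      rw [K.adjoint_subtypeL, Complex.ofReal_one, one_smul]
      simp only [← map_smul, ← map_sum]
      exact hpow z n }⟩

theorem MemC.smul_of_sq_eq_zero {A : Fin N → X →L[ℂ] X} (hA : MemC N 1 A)
    (hsq : ∀ z : Fin N → ℂ, (∑ k, z k • A k) ^ 2 = 0) (ρ : ℝ) : MemC N ρ ((ρ : ℂ) • A) := by
  obtain ⟨Y, ι, isom, T, unit, dil⟩ := hA
  refine ⟨⟨Y, ι, isom, T, unit, fun z n hn => ?_⟩⟩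
  have hdil := dil z n hn
  rw [Complex.ofReal_one, one_smul] at hdil
  rw [sum_smul_smul_comm, smul_pow, ← hdil]
  obtain rfl | hn : n = 1 ∨ 2 ≤ n := by lia
  · rw [pow_one]
  · rw [pow_eq_zero_of_le hn (hsq z), smul_zero, smul_zero]

theorem MemCu.apply_apply_eq_zero {ρ : ℝ} (hρ₀ : ρ ≠ 0) (hρ₁ : ρ ≠ 1) {B : Fin N → X →L[ℂ] X}
    (hB : MemCu N ρ ((ρ : ℂ) • B)) {x : X}
    (hx : ∀ ζ : Fin N → ℂ, (∀ k, ‖ζ k‖ = 1) → ‖(∑ k, ζ k • B k) x‖ = ‖x‖) (k l : Fin N) :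
    B l (B k x) = 0 := by
  obtain ⟨Y, j, hj, T, hT, hdil⟩ := hB
  have cancel_ρ : Function.Injective fun y : X => (ρ : ℂ) • y :=
    smul_right_injective X (Complex.ofReal_ne_zero.2 hρ₀)
  have dil_one (k : Fin N) (y : X) : B k y = adjoint j (T k (j y)) :=
    cancel_ρ (by simpa using congr($(hdil [k] (by simp)) y))
  have dil_two : (ρ : ℂ) • B l (B k x) = adjoint j (T l (T k (j x))) :=
    cancel_ρ (by simpa using congr($(hdil [l, k] (by simp)) x))
  have norm_pencil (ζ : Fin N → ℂ) (hζ : ∀ k, ‖ζ k‖ = 1) :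
      ‖∑ k, ζ k • T k (j x)‖ = ‖adjoint j (∑ k, ζ k • T k (j x))‖ := by
    calc ‖∑ k, ζ k • T k (j x)‖ = ‖(∑ k, ζ k • T k) (j x)‖ := by simp
      _ = ‖j x‖ := norm_map_of_mem_unitary (isUnitaryOp_iff_mem_unitary.1 (hT ζ hζ)) _
      _ = ‖x‖ := (AddMonoidHomClass.isometry_iff_norm j).1 hj x
      _ = ‖(∑ k, ζ k • B k) x‖ := (hx ζ hζ).symm
      _ = ‖adjoint j (∑ k, ζ k • T k (j x))‖ := by simp [dil_one]
  have lift_apply : j (B k x) = T k (j x) := by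
    rw [dil_one]
    exact apply_adjoint_eq_self_of_forall_unimodular hj (u := fun k => T k (j x))
      (fun ζ hζ => (norm_pencil ζ hζ).le) k
  have smul_eq_self : (ρ : ℂ) • B l (B k x) = B l (B k x) := by
    rw [dil_two, ← lift_apply, ← dil_one]
  have sub_one_smul_eq_zero : ((ρ : ℂ) - 1) • B l (B k x) = 0 := by
    rw [sub_smul, one_smul, smul_eq_self, sub_self]
  exact (smul_eq_zero.1 sub_one_smul_eq_zero).resolve_left (sub_ne_zero.2 (mod_cast hρ₁))

end Classes

theorem memC_one_diamondTuple {N : ℕ} {E : Type} [NormedAddCommGroup E] [InnerProductSpace ℂ E]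
    [CompleteSpace E] (b : HilbertBasis (ℤ × Bool) ℂ E) (f : Bool → Fin N) :
    MemC N 1 (diamondTuple b f) :=
  memC_one_compression (diamond b) (fun _ => sum_smul_coloredShift_mem_unitary b _ _)
    fun z => (isLadderMap_sum_smul_ladderShift b f z).compression_pow

theorem exists_memC_not_memCu_general (ρ : ℝ) (hρ₀ : ρ ≠ 0) (hρ₁ : ρ ≠ 1) (N : ℕ) (hN : 1 < N) :
    Nonempty (UnitaryNotUniformWitness N ρ) := by
  let b : HilbertBasis (ℤ × Bool) ℂ (lp (fun _ : ℤ × Bool => ℂ) 2) := default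
  let f : Bool → Fin N := fun x => if x then ⟨1, hN⟩ else ⟨0, by lia⟩
  refine ⟨{
    X := diamond b
    A := (ρ : ℂ) • diamondTuple b f
    memC := (memC_one_diamondTuple b f).smul_of_sq_eq_zero (sum_smul_diamondTuple_sq b f) ρ
    not_memCu := fun h => ?_ }⟩
  exact diamondTuple_diamondTuple_bottom_ne_zero b (by simp [f]) (h.apply_apply_eq_zero hρ₀ hρ₁
    (fun ζ hζ => norm_sum_smul_diamondTuple_bottom b f hζ) (f true) (f false))

/-- for every `ρ > 1` and `N > 1` there exist a complex Hilbert space `X` and an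
`N`-tuple `A` on `X` with `A ∈ C_{ρ,N}` but `A ∉ C^u_{ρ,N}`; hence `C^u_{ρ,N} ⊊ C_{ρ,N}`. -/
theorem exists_memC_not_memCu (ρ : ℝ) (hρ : 1 < ρ) (N : ℕ) (hN : 1 < N) :
    Nonempty (UnitaryNotUniformWitness N ρ) :=
  exists_memC_not_memCu_general ρ (by linarith) hρ.ne' N hN
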